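/- Let (X,T) be a minimal Cantor system and let S be a minimal bounded speedup of T. If the topological entropy of T is zero, then the topological entropy of S is zero. -/

import Mathlib

/-- A minimal Cantor-type dynamical system: every `T`-orbit (over `ℤ`) is dense. -/
def IsMinimalHomeo {X : Type*} [TopologicalSpace X] (T : Equiv.Perm X) : Prop :=
  ∀ x : X, Dense (Set.range fun n : ℤ => (T ^ n) x)

open Set Function Uniformity Dynamics ExpGrowth

/-- A minimal homeomorphism of a perfect Hausdorff space has no periodic points. -/
theorem IsMinimalHomeo.pow_apply_ne {X : Type*} [TopologicalSpace X] [T2Space X] [PerfectSpace X]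
    {T : Equiv.Perm X} (hT : IsMinimalHomeo T) (x : X) {k : ℕ} (hk : k ≠ 0) :
    (T ^ k) x ≠ x := by
  intro hx
  have hfin : (range fun n : ℤ => (T ^ n) x).Finite := by
    refine ((Set.finite_Ico (0 : ℤ) k).image fun n : ℤ => (T ^ n) x).subset ?_
    rintro _ ⟨n, rfl⟩
    have hk' : (0 : ℤ) < k := by omega
    refine ⟨n % k, ⟨Int.emod_nonneg n hk'.ne', Int.emod_lt_of_pos n hk'⟩, ?_⟩
    conv_rhs => rw [← Int.emod_add_mul_ediv n k]
    simp only [zpow_add, zpow_mul, zpow_natCast, Equiv.Perm.mul_apply]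
    rw [Equiv.Perm.zpow_apply_eq_self_of_apply_eq_self hx]
  have huniv : (univ : Set X).Finite := by
    rw [← (hT x).closure_eq, hfin.isClosed.closure_eq]
    exact hfin
  exact (infinite_of_mem_nhds x Filter.univ_mem) huniv

/-- A bounded jump function between an aperiodic homeomorphism and a continuous map is
continuous. -/
theorem continuous_jump {X : Type*} [TopologicalSpace X] [T2Space X]
    {T : Equiv.Perm X} (hTc : Continuous T)
    (hT : ∀ (x : X) {k : ℕ}, k ≠ 0 → (T ^ k) x ≠ x)
    {S : X → X} (hSc : Continuous S) {p : X → ℕ} {M : ℕ} (hpM : ∀ x, p x ≤ M)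
    (hSp : ∀ x, S x = (T ^ p x) x) : Continuous p := by
  have hinj : ∀ x, Injective fun k : ℕ => (T ^ k) x := by
    intro x
    refine injective_iff_pairwise_ne.2 <| (Std.Symm.pairwise_on _).2 ?_
    intro i j hij heq
    obtain ⟨d, rfl⟩ := Nat.exists_eq_add_of_lt hij
    refine hT x (Nat.succ_ne_zero d) ((T ^ i).injective ?_)
    rw [← Equiv.Perm.mul_apply, ← pow_add]
    exact heq.symm
  rw [continuous_iff_isClosed]
  intro s _
  have hs : p ⁻¹' s = ⋃ k ∈ s ∩ Iic M, {x | S x = (T ^ k) x} := by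
    ext x
    simp only [mem_preimage, mem_iUnion, mem_ofPred_eq, exists_prop]
    refine ⟨fun h => ⟨p x, ⟨h, hpM x⟩, hSp x⟩, ?_⟩
    rintro ⟨k, ⟨hk, -⟩, hx⟩
    rwa [hinj x ((hSp x).symm.trans hx)]
  rw [hs]
  refine ((finite_Iic M).subset inter_subset_right).isClosed_biUnion fun k _ => ?_
  refine isClosed_eq hSc ?_
  rw [← Equiv.Perm.iterate_eq_pow]
  exact hTc.iterate k

/-- If the jump function is constant on `V`-close pairs, then `T`-orbits which are `V`-close up to
time `M * n` give `S`-orbits which are `V`-close up to time `n`. -/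
theorem dynEntourage_subset_of_speedup {X : Type*} {T S : X → X} {p : X → ℕ} {M : ℕ}
    (hM : M ≠ 0) (hpM : ∀ x, p x ≤ M) (hSp : ∀ x, S x = T^[p x] x) {V : SetRel X X}
    (hV : ∀ x y, (x, y) ∈ V → p x = p y) (n : ℕ) :
    dynEntourage T V (M * n) ⊆ dynEntourage S V n := by
  rintro ⟨x, y⟩ h
  rw [mem_dynEntourage] at h ⊢
  have key : ∀ i ≤ n, ∃ k ≤ M * i, S^[i] x = T^[k] x ∧ S^[i] y = T^[k] y := by
    intro i
    induction i with
    | zero => exact fun _ => ⟨0, le_rfl, rfl, rfl⟩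
    | succ i ih =>
      intro hi
      obtain ⟨k, hk, hx, hy⟩ := ih (by omega)
      have hlt : k < M * n := hk.trans_lt (Nat.mul_lt_mul_of_pos_left hi (by omega))
      refine ⟨p (T^[k] x) + k, ?_, ?_, ?_⟩
      · have := hpM (T^[k] x)
        rw [Nat.mul_succ]
        omega
      · rw [iterate_succ_apply', hx, hSp, iterate_add_apply]
      · rw [iterate_succ_apply', hy, hSp, iterate_add_apply, hV _ _ (h k hlt)]
  intro i hi
  obtain ⟨k, hk, hx, hy⟩ := key i hi.le
  rw [hx, hy]
  exact h k (hk.trans_lt (Nat.mul_lt_mul_of_pos_left hi (by omega)))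

/-- A speedup with continuous jump function bounded by `M` multiplies the entropy by at
most `M`. -/
theorem coverEntropy_speedup_le {X : Type*} [UniformSpace X] [CompactSpace X]
    {T S : X → X} {p : X → ℕ} (hp : Continuous p) {M : ℕ} (hM : M ≠ 0) (hpM : ∀ x, p x ≤ M)
    (hSp : ∀ x, S x = T^[p x] x) (F : Set X) :
    coverEntropy S F ≤ M * coverEntropy T F := by
  refine iSup₂_le fun U hU => ?_
  have hpU : {q : X × X | p q.1 = p q.2} ∈ 𝓤 X :=
    CompactSpace.uniformContinuous_of_continuous hp
      (DiscreteUniformity.relId_mem_uniformity ℕ)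
  set V : SetRel X X := U ∩ {q : X × X | p q.1 = p q.2}
  have hV : V ∈ 𝓤 X := Filter.inter_mem hU hpU
  have hsub (n : ℕ) : dynEntourage T V (M * n) ⊆ dynEntourage S U n :=
    (dynEntourage_subset_of_speedup hM hpM hSp (fun _ _ h => h.2) n).trans
      (dynEntourage_monotone S n inter_subset_left)
  have hcard (n : ℕ) : coverMincard S F U n ≤ coverMincard T F V (M * n) :=
    biInf_mono fun _ h => SetRel.IsCover.mono_entourage (hsub n) h
  calc coverEntropyEntourage S F U
      ≤ expGrowthSup fun n : ℕ => (coverMincard T F V (M * n) : ENNReal) :=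
        expGrowthSup_monotone fun n => ENat.toENNReal_mono (hcard n)
    _ = M * coverEntropyEntourage T F V :=
        Monotone.expGrowthSup_comp_mul (u := fun n : ℕ => (coverMincard T F V n : ENNReal))
          (fun _ _ h => ENat.toENNReal_mono (coverMincard_monotone_time T F V h)) hM
    _ ≤ M * coverEntropy T F :=
        mul_le_mul_of_nonneg_left (coverEntropyEntourage_le_coverEntropy T F hV)
          (Nat.cast_nonneg' M)

/-- If `S` is a minimal bounded speedup of a minimal Cantor system `(X,T)`
and `h(T) = 0`, then `h(S) = 0`. -/
theorem boundedSpeedup_entropy_zero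
    {X : Type*} [MetricSpace X] [CompactSpace X]
    [TotallyDisconnectedSpace X] [PerfectSpace X] [Nonempty X]
    (T : Equiv.Perm X) (hTc : Continuous T) (hTc' : Continuous T.symm)
    (hTmin : IsMinimalHomeo T)
    (p : X → ℕ) (hp1 : ∀ x, 1 ≤ p x) (hpbdd : ∃ M : ℕ, ∀ x, p x ≤ M)
    (S : Equiv.Perm X) (hSc : Continuous S) (hSc' : Continuous S.symm)
    (hSp : ∀ x, S x = (T ^ p x) x) (hSmin : IsMinimalHomeo S)
    (hT0 : Dynamics.coverEntropy (⇑T) Set.univ = 0) :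
    Dynamics.coverEntropy (⇑S) Set.univ = 0 := by
  obtain ⟨M, hpM⟩ := hpbdd
  have hM : M ≠ 0 := by
    obtain ⟨x⟩ := ‹Nonempty X›
    have := hp1 x
    have := hpM x
    omega
  have hp : Continuous p := continuous_jump hTc hTmin.pow_apply_ne hSc hpM hSp
  refine le_antisymm ?_ (coverEntropy_nonneg S univ_nonempty)
  have hle := coverEntropy_speedup_le (T := T) (S := S) hp hM hpM
    (fun x => by rw [hSp, Equiv.Perm.iterate_eq_pow]) univ
  rwa [hT0, mul_zero] at hle
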